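/- In dimension n ≥ 2, let k̃(x) = 2^{-n}ω_n^{-1} for |x| ≤ 2 and 0 otherwise (ω_n the volume of the unit ball), and let Ω₀ = B̄₂(0) \ B₁(0). For the solution of γ_t = ∫ k̃(x-y)γ⁺(t,y)dy - γ⁺(t,x) with γ(0,·) = c₀ on Ω̄₀ and γ(0,·) = -ℓ₀ outside, if (1 - 2^{-n})c₀ > ℓ₀ then the first time t₂ at which γ reaches 0 outside Ω̄₀ is finite, and at t = t₂ the solution touches zero only at x = 0; that is, a new component of the positivity set is created at the center, disjoint from the annulus (jumping phenomenon). -/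

import Mathlib

open MeasureTheory Filter

lemma scal_mono (f F : ℝ → ℝ) (hc : ContinuousOn f (Set.Ici 0)) (hF : ∀ t, 0 ≤ F t)
    (hd : ∀ t > (0:ℝ), HasDerivAt f (F t - max (f t) 0) t) (s t : ℝ) (hs : 0 ≤ s) (hst : s ≤ t) :
    Real.exp s * max (f s) 0 ≤ Real.exp t * max (f t) 0 := by
  -- positive start
  have key : ∀ s t : ℝ, 0 < s → s ≤ t → Real.exp s * max (f s) 0 ≤ Real.exp t * max (f t) 0 := by
    intro s t hs hst
    rcases le_or_gt (f s) 0 with h0 | h0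
    · rw [max_eq_right h0]
      have := le_max_right (f t) 0
      have := Real.exp_pos t
      simp only [mul_zero]
      positivity
    have hpos : ∀ r ∈ Set.Icc s t, 0 < f r := by
      have hB : ∀ r, HasDerivAt (fun r => -(f s * Real.exp (-2 * (r - s))))
          (2 * (f s * Real.exp (-2 * (r - s)))) r := by
        intro r
        have h1 : HasDerivAt (fun r : ℝ => -2 * (r - s)) (-2) r := by
          simpa using ((hasDerivAt_id r).sub_const s).const_mul (-2)
        have := (h1.exp.const_mul (f s)).neg
        exact this.congr_deriv (by ring)
      have := image_le_of_deriv_right_lt_deriv_boundary' (f := fun r => - f r)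
        (f' := fun r => -(F r - max (f r) 0)) (a := s) (b := t)
        (B := fun r => -(f s * Real.exp (-2 * (r - s))))
        (B' := fun r => 2 * (f s * Real.exp (-2 * (r - s))))
        ((hc.mono (fun r hr => hs.le.trans hr.1)).neg)
        (fun r hr => ((hd r (hs.trans_le hr.1)).neg).hasDerivWithinAt)
        (by simp)
        (fun r _ => (hB r).continuousAt.continuousWithinAt)
        (fun r hr => (hB r).hasDerivWithinAt)
        (by
          intro r hr h
          have h2 : f r = f s * Real.exp (-2 * (r - s)) := by simpa using h
          have h3 : 0 < f r := by rw [h2]; positivity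
          rw [← h2, max_eq_left h3.le]
          linarith [hF r])
      intro r hr
      have h4 := this hr
      have : 0 < f s * Real.exp (-2 * (r - s)) := by positivity
      linarith
    have hm : MonotoneOn (fun r => Real.exp r * f r) (Set.Icc s t) := by
      apply monotoneOn_of_deriv_nonneg (convex_Icc s t)
      · exact Real.continuous_exp.continuousOn.mul (hc.mono (fun r hr => hs.le.trans hr.1))
      · intro r hr
        rw [interior_Icc] at hr
        exact ((Real.hasDerivAt_exp r).mul (hd r (hs.trans hr.1))).differentiableAt.differentiableWithinAt
      · intro r hr
        rw [interior_Icc] at hr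
        have := ((Real.hasDerivAt_exp r).mul (hd r (hs.trans hr.1))).deriv
        have e : (fun r => Real.exp r * f r) = Real.exp * f := rfl
        rw [e, this, max_eq_left (hpos r ⟨hr.1.le, hr.2.le⟩).le]
        have := Real.exp_pos r
        have := mul_nonneg this.le (hF r)
        linarith
    rw [max_eq_left (hpos s ⟨le_rfl, hst⟩).le, max_eq_left (hpos t ⟨hst, le_rfl⟩).le]
    exact hm ⟨le_rfl, hst⟩ ⟨hst, le_rfl⟩ hst
  rcases hs.lt_or_eq with h | h
  · exact key s t h hst
  subst h
  rcases hst.lt_or_eq with h | h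
  swap
  · rw [h]
  have hcont : ContinuousOn (fun r => Real.exp r * max (f r) 0) (Set.Ici 0) :=
    Real.continuous_exp.continuousOn.mul (hc.sup continuousOn_const)
  have ht : Tendsto (fun r => Real.exp r * max (f r) 0) (nhdsWithin 0 (Set.Ioi 0))
      (nhds (Real.exp 0 * max (f 0) 0)) :=
    (hcont 0 (by simp)).mono_left (nhdsWithin_mono _ Set.Ioi_subset_Ici_self)
  refine le_of_tendsto ht ?_
  filter_upwards [Ioo_mem_nhdsGT h] with r hr
  exact key r t hr.1 hr.2.le

lemma scal_darboux (f F : ℝ → ℝ) (hc : ContinuousOn f (Set.Ici 0))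
    (hd : ∀ t > (0:ℝ), HasDerivAt f (F t - max (f t) 0) t) (s τ b : ℝ) (hs : 0 < s) (hst : s ≤ τ)
    (hb : 0 < b) (hF : ∀ r ∈ Set.Icc s τ, F r = 0 ∨ b ≤ F r) (hτ : F τ = 0) : F s = 0 := by
  by_contra hne
  have hbs : b ≤ F s := (hF s ⟨le_rfl, hst⟩).resolve_left hne
  set G : ℝ → ℝ := fun r => max (f (max r 0)) 0
  have hG : Continuous G := by
    have : Continuous (fun r : ℝ => f (max r 0)) :=
      hc.comp_continuous (by fun_prop) (fun r => by simp)
    exact this.max continuous_const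
  have hd2 : ∀ r ∈ Set.Icc s τ, HasDerivWithinAt (fun r => f r + ∫ u in (0:ℝ)..r, G u) (F r) (Set.Icc s τ) r := by
    intro r hr
    have hr0 : 0 < r := hs.trans_le hr.1
    have h1 := (hd r hr0).add (hG.integral_hasStrictDerivAt 0 r).hasDerivAt
    have h2 : G r = max (f r) 0 := by simp only [G]; rw [max_eq_left hr0.le]
    rw [h2, sub_add_cancel] at h1
    exact h1.hasDerivWithinAt
  obtain ⟨r, hr, hrF⟩ := exists_hasDerivWithinAt_eq_of_lt_of_gt hst hd2
    (m := b / 2) (by linarith) (by rw [hτ]; linarith)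
  rcases hF r ⟨hr.1.le, hr.2.le⟩ with h | h <;> linarith

lemma scal_ftc (f F : ℝ → ℝ) (hc : ContinuousOn f (Set.Ici 0))
    (hd : ∀ t > (0:ℝ), HasDerivAt f (F t - max (f t) 0) t)
    (hm : MonotoneOn (fun t => Real.exp t * F t) (Set.Ici 0)) (s t : ℝ) (hs : 0 ≤ s) (hst : s ≤ t) :
    Real.exp t * f t - Real.exp s * f s = 
      (∫ r in s..t, Real.exp r * F r) + ∫ r in s..t, Real.exp r * min (f r) 0 := by
  have hsub : Set.uIcc s t ⊆ Set.Ici 0 := by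
    rw [Set.uIcc_of_le hst]; exact fun r hr => hs.trans hr.1
  have hsub' : Set.Icc s t ⊆ Set.Ici 0 := fun r hr => hs.trans hr.1
  have i1 : IntervalIntegrable (fun t => Real.exp t * F t) volume s t :=
    (hm.mono hsub).intervalIntegrable
  have i2 : IntervalIntegrable (fun r => Real.exp r * min (f r) 0) volume s t :=
    ContinuousOn.intervalIntegrable
      (Real.continuous_exp.continuousOn.mul ((hc.mono hsub).inf continuousOn_const))
  rw [← intervalIntegral.integral_add i1 i2]
  symm
  apply intervalIntegral.integral_eq_sub_of_hasDerivAt_of_le (f := fun r => Real.exp r * f r) hst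
    (Real.continuous_exp.continuousOn.mul (hc.mono hsub')) _ (i1.add i2)
  intro r hr
  have := (Real.hasDerivAt_exp r).mul (hd r (hs.trans_lt hr.1))
  refine this.congr_deriv ?_
  have := min_add_max (f r) 0
  have : min (f r) 0 = f r - max (f r) 0 := by linarith
  rw [this]; ring

lemma scal_upper (f F : ℝ → ℝ) (hc : ContinuousOn f (Set.Ici 0))
    (hd : ∀ t > (0:ℝ), HasDerivAt f (F t - max (f t) 0) t)
    (hm : MonotoneOn (fun t => Real.exp t * F t) (Set.Ici 0)) (t : ℝ) (ht : 0 ≤ t) :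
    Real.exp t * f t ≤ f 0 + ∫ r in (0:ℝ)..t, Real.exp r * F r := by
  have := scal_ftc f F hc hd hm 0 t le_rfl ht
  have h2 : ∫ r in (0:ℝ)..t, Real.exp r * min (f r) 0 ≤ 0 := by
    rw [intervalIntegral.integral_of_le ht]
    apply integral_nonpos
    intro r
    exact mul_nonpos_of_nonneg_of_nonpos (Real.exp_pos r).le (min_le_right _ _)
  rw [Real.exp_zero, one_mul] at this
  linarith

lemma scal_lower (f F : ℝ → ℝ) (hc : ContinuousOn f (Set.Ici 0)) (hF : ∀ t, 0 ≤ F t)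
    (hd : ∀ t > (0:ℝ), HasDerivAt f (F t - max (f t) 0) t)
    (hm : MonotoneOn (fun t => Real.exp t * F t) (Set.Ici 0)) (s t : ℝ) (hs : 0 ≤ s) (hst : s ≤ t)
    (hp : 0 < f s) :
    ∫ r in s..t, Real.exp r * F r ≤ Real.exp t * max (f t) 0 := by
  have := scal_ftc f F hc hd hm s t hs hst
  have h2 : ∫ r in s..t, Real.exp r * min (f r) 0 = 0 := by
    rw [intervalIntegral.integral_congr (g := fun _ => 0)]
    · simp
    intro r hr
    rw [Set.uIcc_of_le hst] at hr
    have h3 := scal_mono f F hc hF hd s r hs hr.1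
    rw [max_eq_left hp.le] at h3
    have h4 : 0 < Real.exp r * max (f r) 0 := lt_of_lt_of_le (by positivity) h3
    have h5 : 0 < max (f r) 0 := (pos_iff_pos_of_mul_pos h4).1 (Real.exp_pos r)
    have h6 : 0 < f r := by simpa using h5
    simp [h6.le]
  have h7 : 0 < Real.exp s * f s := by positivity
  have h8 : Real.exp t * f t ≤ Real.exp t * max (f t) 0 := 
    mul_le_mul_of_nonneg_left (le_max_left _ _) (Real.exp_pos t).le
  linarith

/-- scalar induction step -/
lemma scal_step (f F : ℝ → ℝ) (hc : ContinuousOn f (Set.Ici 0)) (hF : ∀ t, 0 ≤ F t)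
    (hd : ∀ t > (0:ℝ), HasDerivAt f (F t - max (f t) 0) t)
    (hm : MonotoneOn (fun t => Real.exp t * F t) (Set.Ici 0)) (c q : ℝ) (hcc : 0 ≤ c) (hq : 0 ≤ q)
    (h0 : f 0 ≤ c)
    (hb : ∀ r ≥ (0:ℝ), Real.exp r * F r ≤ c * Real.exp r + q * (Real.exp (3 * r) * F (3 * r)))
    (s : ℝ) (hs : 0 ≤ s) :
    Real.exp s * max (f s) 0 ≤ c * Real.exp s + q / 2 * (Real.exp (3 * s) * max (f (3 * s)) 0) := by
  rcases le_or_gt (f s) 0 with hp | hp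
  · rw [max_eq_right hp]
    have := le_max_right (f (3 * s)) 0
    rw [mul_zero]
    positivity
  have hi : ∀ a b : ℝ, 0 ≤ a → 0 ≤ b → IntervalIntegrable (fun t => Real.exp t * F t) volume a b := by
    intro a b ha hb
    apply (hm.mono _).intervalIntegrable
    intro r hr
    exact (le_inf ha hb).trans hr.1
  have hU := scal_upper f F hc hd hm s hs
  have hL := scal_lower f F hc hF hd hm s (3 * s) hs (by linarith) hp
  set A := ∫ r in (0:ℝ)..s, Real.exp r * F r
  set B := ∫ r in s..(3*s), Real.exp r * F r
  have hAB : A + B = ∫ r in (0:ℝ)..(3*s), Real.exp r * F r :=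
    intervalIntegral.integral_add_adjacent_intervals (hi _ _ le_rfl hs) (hi _ _ hs (by linarith))
  have hA : A ≤ s * (Real.exp s * F s) := by
    have := intervalIntegral.integral_mono_on (μ := volume) hs (hi _ _ le_rfl hs) 
      (g := fun _ => Real.exp s * F s) (by simp) (fun r hr => hm hr.1 hs hr.2)
    simp only [intervalIntegral.integral_const, smul_eq_mul] at this
    linarith
  have hB : 2 * s * (Real.exp s * F s) ≤ B := by
    have := intervalIntegral.integral_mono_on (μ := volume) (a := s) (b := 3 * s) (by linarith) 
      (f := fun _ => Real.exp s * F s) (by simp) (hi _ _ hs (by linarith))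
      (fun r hr => hm hs (hs.trans hr.1) hr.1)
    simp only [intervalIntegral.integral_const, smul_eq_mul] at this
    linarith
  have hcv : ∫ r in (0:ℝ)..s, Real.exp (3 * r) * F (3 * r) = (A + B) / 3 := by
    rw [hAB, intervalIntegral.integral_comp_mul_left (fun r => Real.exp r * F r) (by norm_num : (3:ℝ) ≠ 0)]
    simp; ring
  have hi3 : IntervalIntegrable (fun r => Real.exp (3 * r) * F (3 * r)) volume 0 s := by
    have : MonotoneOn (fun r => Real.exp (3 * r) * F (3 * r)) (Set.uIcc 0 s) := by
      intro a ha b hb hab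
      rw [Set.uIcc_of_le hs] at ha hb
      exact hm (show (0:ℝ) ≤ 3 * a by linarith [ha.1]) (show (0:ℝ) ≤ 3 * b by linarith [hb.1]) (by linarith)
    exact this.intervalIntegrable
  have hA2 : A ≤ c * (Real.exp s - 1) + q * ((A + B) / 3) := by
    have hci : IntervalIntegrable (fun r => c * Real.exp r) volume 0 s := 
      (by fun_prop : Continuous fun r => c * Real.exp r).intervalIntegrable _ _
    have := intervalIntegral.integral_mono_on (μ := volume) hs (hi _ _ le_rfl hs) 
      (hci.add (hi3.const_mul q)) (fun r hr => hb r hr.1)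
    have e : ∫ r in (0:ℝ)..s, (c * Real.exp r + q * (Real.exp (3 * r) * F (3 * r)))
        = c * (Real.exp s - 1) + q * ((A + B) / 3) := by
      rw [intervalIntegral.integral_add hci (hi3.const_mul q), intervalIntegral.integral_const_mul,
        intervalIntegral.integral_const_mul, hcv, integral_exp, Real.exp_zero]
    exact this.trans_eq e
  rw [max_eq_left hp.le]
  have h9 : q * ((A + B) / 3) ≤ q * (B / 2) := mul_le_mul_of_nonneg_left (by linarith) hq
  have h10 : q / 2 * B ≤ q / 2 * (Real.exp (3 * s) * max (f (3 * s)) 0) :=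
    mul_le_mul_of_nonneg_left hL (by positivity)
  linarith

lemma sp_locint {n : ℕ} (γ : ℝ → EuclideanSpace ℝ (Fin n) → ℝ) (κ c : ℝ) (hκ : 0 < κ) (hc0 : 0 < c)
    (hcont : ∀ x, ContinuousOn (fun t => γ t x) (Set.Ici 0))
    (hmeas : ∀ t, Measurable (γ t))
    (hd : ∀ t > (0:ℝ), ∀ x, HasDerivAt (fun s => γ s x)
        (κ * (∫ y in Metric.closedBall x 2, max (γ t y) 0) - max (γ t x) 0) t)
    (h0 : ∀ x, γ 0 x ≤ c) (t : ℝ) (ht : 0 ≤ t) :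
    LocallyIntegrable (fun y => max (γ t y) 0) := by
  have hgm : ∀ t, Measurable (fun y => max (γ t y) 0) := fun t => (hmeas t).max measurable_const
  have hFn : ∀ x t, 0 ≤ κ * (∫ y in Metric.closedBall x 2, max (γ t y) 0) := fun x t =>
    mul_nonneg hκ.le (integral_nonneg fun y => le_max_right _ _)
  -- bounded on an open ball gives integrable
  have hbdd : ∀ t p, (∀ y ∈ Metric.ball p 1, γ t y ≤ c) →
      IntegrableOn (fun y => max (γ t y) 0) (Metric.ball p 1) := by
    intro t p hb
    refine Measure.integrableOn_of_bounded (M := c) (measure_ball_lt_top).ne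
      (hgm t).aestronglyMeasurable ?_
    refine (ae_restrict_iff' Metric.isOpen_ball.measurableSet).2 (ae_of_all _ ?_)
    intro y hy
    rw [Real.norm_of_nonneg (le_max_right _ _)]
    exact max_le (hb y hy) hc0.le
  intro p
  by_contra hnot
  have hball : ¬ IntegrableOn (fun y => max (γ t y) 0) (Metric.ball p 1) := fun h =>
    hnot ⟨_, Metric.ball_mem_nhds p one_pos, h⟩
  rcases ht.lt_or_eq with htp | htp
  swap
  · subst htp
    exact hball (hbdd 0 p fun y _ => h0 y)
  apply hball
  apply hbdd
  intro y hy
  -- nonintegrable on closedBall y 2 at all times ≥ t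
  have hmono := fun z => scal_mono (fun s => γ s z) _ (hcont z) (hFn z) (fun s hs => hd s hs z)
  have hni : ∀ r, t ≤ r → ¬ IntegrableOn (fun y => max (γ r y) 0) (Metric.closedBall y 2) := by
    intro r hr hint
    apply hball
    have h1 : IntegrableOn (fun y => Real.exp (r - t) * max (γ r y) 0) (Metric.ball p 1) := by
      apply Integrable.const_mul
      apply hint.mono_set
      intro z hz
      rw [Metric.mem_ball] at hz hy
      rw [Metric.mem_closedBall]
      have := dist_triangle_right z y p
      linarith
    refine Integrable.mono' h1 (hgm t).aestronglyMeasurable (ae_of_all _ ?_)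
    intro z
    rw [Real.norm_of_nonneg (le_max_right _ _)]
    have := hmono z t r ht hr
    have e : Real.exp r = Real.exp t * Real.exp (r - t) := by rw [← Real.exp_add]; ring_nf
    rw [e, mul_assoc] at this
    exact le_of_mul_le_mul_left this (Real.exp_pos t)
  have hz : ∀ s > (0:ℝ), κ * (∫ z in Metric.closedBall y 2, max (γ s z) 0) = 0 := by
    intro s hs
    rcases le_or_gt t s with h | h
    · rw [integral_undef (hni s h), mul_zero]
    by_contra hne
    have hpos := lt_of_le_of_ne (hFn y s) (Ne.symm hne)
    apply hne
    refine scal_darboux (fun s => γ s y) (fun s => κ * (∫ z in Metric.closedBall y 2, max (γ s z) 0))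
      (hcont y) (fun s hs => hd s hs y) s t
      (Real.exp (s - t) * (κ * (∫ z in Metric.closedBall y 2, max (γ s z) 0))) hs h.le
      (by positivity) ?_ (by rw [integral_undef (hni t le_rfl), mul_zero])
    intro r hr
    by_cases hi : IntegrableOn (fun z => max (γ r z) 0) (Metric.closedBall y 2)
    swap
    · left; rw [integral_undef hi, mul_zero]
    right
    rw [mul_left_comm, ← integral_const_mul]
    apply mul_le_mul_of_nonneg_left _ hκ.le
    apply integral_mono_of_nonneg _ hi
    · refine ae_of_all _ fun z => ?_
      have h1 := hmono z s r hs.le hr.1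
      have e : Real.exp (s - t) = Real.exp s * Real.exp (-t) := by rw [← Real.exp_add]; ring_nf
      have e2 : Real.exp r * Real.exp (-t) ≤ 1 := by
        rw [← Real.exp_add, Real.exp_le_one_iff]; linarith [hr.2]
      have h3 := le_max_right (γ r z) 0
      simp only
      rw [e]
      calc _ = Real.exp (-t) * (Real.exp s * max (γ s z) 0) := by ring
        _ ≤ Real.exp (-t) * (Real.exp r * max (γ r z) 0) :=
          mul_le_mul_of_nonneg_left h1 (Real.exp_pos _).le
        _ = (Real.exp r * Real.exp (-t)) * max (γ r z) 0 := by ring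
        _ ≤ 1 * max (γ r z) 0 := mul_le_mul_of_nonneg_right e2 h3
        _ = _ := one_mul _
    · refine ae_of_all _ fun z => ?_
      exact mul_nonneg (Real.exp_pos _).le (le_max_right _ _)
  have hanti : AntitoneOn (fun s => γ s y) (Set.Ici 0) := by
    apply antitoneOn_of_deriv_nonpos (convex_Ici 0) (hcont y)
    · intro s hs
      rw [interior_Ici] at hs
      exact (hd s hs y).differentiableAt.differentiableWithinAt
    · intro s hs
      rw [interior_Ici] at hs
      rw [(hd s hs y).deriv, hz s hs]
      have := le_max_right (γ s y) 0
      linarith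
  exact (hanti (Set.mem_Ici.2 le_rfl) ht ht).trans (h0 y)

lemma sp_bound {n : ℕ} (γ : ℝ → EuclideanSpace ℝ (Fin n) → ℝ) (κ c : ℝ) (hκ : 0 < κ) (hc0 : 0 < c)
    (hκv : ∀ x : EuclideanSpace ℝ (Fin n), κ * (volume (Metric.closedBall x 2)).toReal = 1)
    (hcont : ∀ x, ContinuousOn (fun t => γ t x) (Set.Ici 0))
    (hmeas : ∀ t, Measurable (γ t))
    (hd : ∀ t > (0:ℝ), ∀ x, HasDerivAt (fun s => γ s x)
        (κ * (∫ y in Metric.closedBall x 2, max (γ t y) 0) - max (γ t x) 0) t)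
    (h0 : ∀ x, γ 0 x ≤ c) (t : ℝ) (ht : 0 ≤ t) (x : EuclideanSpace ℝ (Fin n)) :
    max (γ t x) 0 ≤ c := by
  have hint : ∀ t ≥ (0:ℝ), ∀ x : EuclideanSpace ℝ (Fin n),
      IntegrableOn (fun y => max (γ t y) 0) (Metric.closedBall x 2) := fun t ht x =>
    (sp_locint γ κ c hκ hc0 hcont hmeas hd h0 t ht).integrableOn_isCompact
      (isCompact_closedBall x 2)
  have hFn : ∀ x t, 0 ≤ κ * (∫ y in Metric.closedBall x 2, max (γ t y) 0) := fun x t =>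
    mul_nonneg hκ.le (integral_nonneg fun y => le_max_right _ _)
  have hmono := fun z => scal_mono (fun s => γ s z) _ (hcont z) (hFn z) (fun s hs => hd s hs z)
  have hFm : ∀ x, MonotoneOn (fun t => Real.exp t * (κ * (∫ y in Metric.closedBall x 2, max (γ t y) 0)))
      (Set.Ici 0) := by
    intro x s hs t ht hst
    simp only
    rw [mul_left_comm, mul_left_comm (Real.exp t)]
    apply mul_le_mul_of_nonneg_left _ hκ.le
    have := integral_mono ((hint s hs x).const_mul (Real.exp s))
      ((hint t ht x).const_mul (Real.exp t)) (fun z => hmono z s t hs hst)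
    rwa [integral_const_mul, integral_const_mul] at this
  have claim : ∀ k : ℕ, ∀ x, ∀ s ≥ (0:ℝ), Real.exp s * max (γ s x) 0 ≤ 
      c * Real.exp s + (1/2:ℝ)^k * (Real.exp (3 * s) * max (γ (3 * s) x) 0) := by
    intro k
    induction k with
    | zero =>
      intro x s hs
      have := hmono x s (3 * s) hs (by linarith)
      have := mul_pos hc0 (Real.exp_pos s)
      simp only [pow_zero, one_mul]
      linarith
    | succ k ih =>
      intro x s hs
      rw [pow_succ, mul_one_div]
      refine scal_step (fun s => γ s x) _ (hcont x) (hFn x) (fun s hs => hd s hs x) (hFm x) c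
        ((1/2:ℝ)^k) hc0.le (by positivity) (h0 x) ?_ s hs
      intro r hr
      have h3r : (0:ℝ) ≤ 3 * r := by linarith
      have hv : IntegrableOn (fun _ : EuclideanSpace ℝ (Fin n) => c * Real.exp r)
          (Metric.closedBall x 2) := integrableOn_const (measure_closedBall_lt_top).ne
      have h1 := integral_mono ((hint r hr x).const_mul (Real.exp r))
        (hv.add (((hint (3 * r) h3r x).const_mul (Real.exp (3 * r))).const_mul ((1/2:ℝ)^k)))
        (fun z => ih z r hr)
      have e : ∫ z in Metric.closedBall x 2, (c * Real.exp r +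
          (1/2:ℝ)^k * (Real.exp (3 * r) * max (γ (3 * r) z) 0)) =
          (volume (Metric.closedBall x 2)).toReal * (c * Real.exp r) +
          (1/2:ℝ)^k * (Real.exp (3 * r) * ∫ z in Metric.closedBall x 2, max (γ (3 * r) z) 0) := by
        rw [integral_add hv (((hint (3 * r) h3r x).const_mul (Real.exp (3 * r))).const_mul ((1/2:ℝ)^k)),
          setIntegral_const, smul_eq_mul, integral_const_mul, integral_const_mul]
        rfl
      have h2 := mul_le_mul_of_nonneg_left (h1.trans_eq e) hκ.le
      rw [integral_const_mul] at h2
      calc _ = κ * (Real.exp r * ∫ z in Metric.closedBall x 2, max (γ r z) 0) := by ring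
        _ ≤ _ := h2
        _ = (κ * (volume (Metric.closedBall x 2)).toReal) * (c * Real.exp r) + 
          (1/2:ℝ)^k * (Real.exp (3 * r) * (κ * ∫ z in Metric.closedBall x 2, max (γ (3 * r) z) 0)) := by ring
        _ = _ := by rw [hκv, one_mul]
  have hlim : Tendsto (fun k : ℕ => c * Real.exp t + (1/2:ℝ)^k * (Real.exp (3 * t) * max (γ (3 * t) x) 0))
      atTop (nhds (c * Real.exp t + 0 * (Real.exp (3 * t) * max (γ (3 * t) x) 0))) :=
    ((tendsto_pow_atTop_nhds_zero_of_lt_one (by norm_num) (by norm_num)).mul_const _).const_add _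
  have := ge_of_tendsto' hlim (fun k => claim k x t ht)
  rw [zero_mul, add_zero, mul_comm] at this
  exact le_of_mul_le_mul_right this (Real.exp_pos t)

/-- Example 2: jumping phenomenon for a non-convex (annular) initial domain
in dimension `n ≥ 2`: the solution first reaches zero outside the annulus
only at the center. -/
theorem stmt_18 (n : ℕ) (hn : 2 ≤ n) (c₀ ℓ₀ : ℝ) (hc₀ : 0 < c₀) (hℓ₀ : 0 < ℓ₀)
    (ωn : ℝ)
    (hωn : ωn = (volume (Metric.ball (0 : EuclideanSpace ℝ (Fin n)) 1)).toReal)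
    (ktil : EuclideanSpace ℝ (Fin n) → ℝ)
    (hktil : ∀ x, ktil x = if ‖x‖ ≤ 2 then ((2:ℝ) ^ n)⁻¹ * ωn⁻¹ else 0)
    (Ω₀ : Set (EuclideanSpace ℝ (Fin n)))
    (hΩ₀ : Ω₀ = Metric.closedBall (0 : EuclideanSpace ℝ (Fin n)) 2 \
      Metric.ball 0 1)
    (hjump : (1 - ((2:ℝ) ^ n)⁻¹) * c₀ > ℓ₀)
    (γ : ℝ → EuclideanSpace ℝ (Fin n) → ℝ)
    (hγ_cont : ∀ x, ContinuousOn (fun t => γ t x) (Set.Ici 0))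
    (hγ_meas : ∀ t, Measurable (γ t))
    (hpde : ∀ t > (0:ℝ), ∀ x, HasDerivAt (fun s => γ s x)
        ((∫ y, ktil (x - y) * max (γ t y) 0) - max (γ t x) 0) t)
    (hinit_in : ∀ x ∈ Ω₀, γ 0 x = c₀)
    (hinit_out : ∀ x ∉ Ω₀, γ 0 x = -ℓ₀) :
    ∃ t₂ > (0:ℝ),
      (∀ t ∈ Set.Ico (0:ℝ) t₂, ∀ x ∉ Ω₀, γ t x < 0) ∧
      γ t₂ 0 = 0 ∧
      (∀ x ∉ Ω₀, x ≠ 0 → γ t₂ x < 0) := by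
  have hωpos : 0 < ωn := by
    rw [hωn]
    exact ENNReal.toReal_pos (Metric.measure_ball_pos volume _ one_pos).ne' measure_ball_lt_top.ne
  set κ : ℝ := ((2:ℝ) ^ n)⁻¹ * ωn⁻¹ with hκdef
  have hκ : 0 < κ := by positivity
  have hvol : ∀ x : EuclideanSpace ℝ (Fin n),
      (volume (Metric.closedBall x 2)).toReal = 2 ^ n * ωn := by
    intro x
    rw [Measure.addHaar_closedBall volume x (by norm_num : (0:ℝ) ≤ 2), ENNReal.toReal_mul, ← hωn,
      ENNReal.toReal_ofReal (by positivity)]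
    simp
  have hκv : ∀ x : EuclideanSpace ℝ (Fin n),
      κ * (volume (Metric.closedBall x 2)).toReal = 1 := by
    intro x
    rw [hvol, hκdef]
    field_simp
  have hd : ∀ t > (0:ℝ), ∀ x, HasDerivAt (fun s => γ s x)
        (κ * (∫ y in Metric.closedBall x 2, max (γ t y) 0) - max (γ t x) 0) t := by
    intro t ht x
    refine (hpde t ht x).congr_deriv ?_
    congr 1
    rw [← integral_const_mul, ← integral_indicator Metric.isClosed_closedBall.measurableSet]
    congr 1
    ext y
    rw [hktil]
    by_cases hy : ‖x - y‖ ≤ 2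
    · have hy' : y ∈ Metric.closedBall x 2 := by
        rw [Metric.mem_closedBall, dist_comm, dist_eq_norm]; exact hy
      rw [if_pos hy, Set.indicator_of_mem hy']
    · have hy' : y ∉ Metric.closedBall x 2 := by
        rw [Metric.mem_closedBall, dist_comm, dist_eq_norm]; exact hy
      rw [if_neg hy, Set.indicator_of_notMem hy', zero_mul]
  have hinit : ∀ x, γ 0 x ≤ c₀ := by
    intro x
    by_cases hx : x ∈ Ω₀
    · exact (hinit_in x hx).le
    · rw [hinit_out x hx]; linarith
  have hbd := sp_bound γ κ c₀ hκ hc₀ hκv hγ_cont hγ_meas hd hinit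
  have hint : ∀ t ≥ (0:ℝ), ∀ x : EuclideanSpace ℝ (Fin n),
      IntegrableOn (fun y => max (γ t y) 0) (Metric.closedBall x 2) := fun t ht x =>
    (sp_locint γ κ c₀ hκ hc₀ hγ_cont hγ_meas hd hinit t ht).integrableOn_isCompact
      (isCompact_closedBall x 2)
  have hFn : ∀ x t, 0 ≤ κ * (∫ y in Metric.closedBall x 2, max (γ t y) 0) := fun x t =>
    mul_nonneg hκ.le (integral_nonneg fun y => le_max_right _ _)
  have hFle : ∀ x, ∀ t ≥ (0:ℝ), κ * (∫ y in Metric.closedBall x 2, max (γ t y) 0) ≤ c₀ := by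
    intro x t ht
    have h1 : ∫ y in Metric.closedBall x 2, max (γ t y) 0 ≤
        ∫ y in Metric.closedBall x 2, c₀ :=
      integral_mono (hint t ht x) (integrableOn_const (measure_closedBall_lt_top).ne)
        (fun z => hbd t ht z)
    rw [setIntegral_const, smul_eq_mul] at h1
    calc _ ≤ κ * ((volume (Metric.closedBall x 2)).toReal * c₀) := mul_le_mul_of_nonneg_left h1 hκ.le
      _ = c₀ := by rw [← mul_assoc, hκv, one_mul]
  have hlow : ∀ t ≥ (0:ℝ), ∀ x ∈ Ω₀, c₀ * Real.exp (-t) ≤ max (γ t x) 0 := by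
    intro t ht x hx
    have := scal_mono (fun s => γ s x) _ (hγ_cont x) (hFn x) (fun s hs => hd s hs x) 0 t le_rfl ht
    simp only [hinit_in x hx] at this
    rw [Real.exp_zero, one_mul, max_eq_left hc₀.le] at this
    rw [Real.exp_neg, ← div_eq_mul_inv, div_le_iff₀ (Real.exp_pos t), mul_comm]
    exact this
  have hlip : ∀ x s t, 0 ≤ s → s ≤ t → γ t x ≤ γ s x + c₀ * (t - s) := by
    intro x s t hs hst
    have hder : ∀ r > (0:ℝ), HasDerivAt (fun r => γ r x - c₀ * r)
        (κ * (∫ y in Metric.closedBall x 2, max (γ r y) 0) - max (γ r x) 0 - c₀) r := by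
      intro r hr
      exact ((hd r hr x).sub ((hasDerivAt_id r).const_mul c₀)).congr_deriv (by simp)
    have hanti : AntitoneOn (fun r => γ r x - c₀ * r) (Set.Ici 0) := by
      apply antitoneOn_of_deriv_nonpos (convex_Ici 0)
      · exact (hγ_cont x).sub (by fun_prop)
      · intro r hr
        rw [interior_Ici] at hr
        exact (hder r hr).differentiableAt.differentiableWithinAt
      · intro r hr
        rw [interior_Ici] at hr
        rw [(hder r hr).deriv]
        have := le_max_right (γ r x) 0
        have := hFle x r (le_of_lt hr)
        linarith
    have := hanti hs (hs.trans hst) hst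
    simp only at this
    linarith
  have h0mem : (0 : EuclideanSpace ℝ (Fin n)) ∉ Ω₀ := by
    rw [hΩ₀]; simp
  have hΩm : MeasurableSet Ω₀ := by
    rw [hΩ₀]
    exact Metric.isClosed_closedBall.measurableSet.diff Metric.isOpen_ball.measurableSet
  have hΩsub : Ω₀ ⊆ Metric.closedBall 0 2 := by rw [hΩ₀]; exact Set.diff_subset
  have hΩfin : volume Ω₀ ≠ ⊤ := ((measure_mono hΩsub).trans_lt measure_closedBall_lt_top).ne
  have hΩvol : (volume Ω₀).toReal = (2 ^ n - 1) * ωn := by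
    have hsub : Metric.ball (0 : EuclideanSpace ℝ (Fin n)) 1 ⊆ Metric.closedBall 0 2 :=
      (Metric.ball_subset_ball (by norm_num)).trans Metric.ball_subset_closedBall
    rw [hΩ₀, measure_diff hsub Metric.isOpen_ball.measurableSet.nullMeasurableSet
      measure_ball_lt_top.ne, ENNReal.toReal_sub_of_le (measure_mono hsub)
      measure_closedBall_lt_top.ne, hvol, ← hωn]
    ring
  set m : ℝ := (1 - ((2:ℝ) ^ n)⁻¹) * c₀ with hm
  -- lower bound of the integral over a subset of the annulus
  have hsublow : ∀ t ≥ (0:ℝ), ∀ A ⊆ Ω₀, MeasurableSet A →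
      (volume A).toReal * (c₀ * Real.exp (-t)) ≤ ∫ y in A, max (γ t y) 0 := by
    intro t ht A hA hAm
    have hAfin : volume A ≠ ⊤ := ((measure_mono hA).trans_lt hΩfin.lt_top).ne
    have := setIntegral_mono_on (μ := volume) (f := fun _ => c₀ * Real.exp (-t))
      (integrableOn_const hAfin)
      ((hint t ht 0).mono_set (hA.trans hΩsub)) hAm (fun y hy => hlow t ht y (hA hy))
    rwa [setIntegral_const, smul_eq_mul] at this
  have hF0 : ∀ t ≥ (0:ℝ), m * Real.exp (-t) ≤
      κ * (∫ y in Metric.closedBall 0 2, max (γ t y) 0) := by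
    intro t ht
    have h1 := hsublow t ht Ω₀ subset_rfl hΩm
    have h2 : ∫ y in Ω₀, max (γ t y) 0 ≤ ∫ y in Metric.closedBall 0 2, max (γ t y) 0 :=
      setIntegral_mono_set (hint t ht 0) (ae_of_all _ fun y => le_max_right _ _)
        (ae_of_all _ hΩsub)
    refine le_trans (le_of_eq ?_) (mul_le_mul_of_nonneg_left (h1.trans h2) hκ.le)
    rw [hΩvol, hm, hκdef]
    field_simp
  -- the touching set
  set S : Set ℝ := {t | 0 ≤ t ∧ ∃ x, x ∉ Ω₀ ∧ 0 ≤ γ t x} with hS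
  have hSne : S.Nonempty := by
    by_contra hemp
    have hneg : ∀ t ≥ (0:ℝ), γ t 0 < 0 := by
      intro t ht
      by_contra hcon
      exact hemp ⟨t, ht, 0, h0mem, not_lt.1 hcon⟩
    have hder : ∀ r > (0:ℝ), HasDerivAt (fun r => γ r 0 + m * Real.exp (-r))
        (κ * (∫ y in Metric.closedBall 0 2, max (γ r y) 0) - max (γ r 0) 0 + m * -Real.exp (-r)) r := by
      intro r hr
      have h1 : HasDerivAt (fun r : ℝ => Real.exp (-r)) (-Real.exp (-r)) r := by
        simpa using (hasDerivAt_neg r).exp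
      exact (hd r hr 0).add (h1.const_mul m)
    have hmon : MonotoneOn (fun r => γ r 0 + m * Real.exp (-r)) (Set.Ici 0) := by
      apply monotoneOn_of_deriv_nonneg (convex_Ici 0)
      · exact (hγ_cont 0).add (by fun_prop)
      · intro r hr
        rw [interior_Ici] at hr
        exact (hder r hr).differentiableAt.differentiableWithinAt
      · intro r hr
        rw [interior_Ici] at hr
        rw [(hder r hr).deriv, max_eq_right (hneg r (le_of_lt hr)).le]
        have := hF0 r (le_of_lt hr)
        linarith
    have hml : 0 < m - ℓ₀ := by linarith
    have hmp : 0 < m := by linarith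
    have ht : 0 ≤ Real.log (m / (m - ℓ₀)) := by
      apply Real.log_nonneg
      rw [le_div_iff₀ hml]; linarith
    have h1 := hmon (Set.mem_Ici.2 le_rfl) ht ht
    simp only [hinit_out 0 h0mem] at h1
    rw [Real.exp_neg (Real.log _), Real.exp_log (by positivity), inv_div, mul_div_cancel₀ _ hmp.ne'] at h1
    have := hneg _ ht
    simp only [neg_zero, Real.exp_zero] at h1
    linarith
  have hSlow : ∀ t ∈ S, ℓ₀ / c₀ ≤ t := by
    rintro t ⟨ht, x, hx, hγx⟩
    have := hlip x 0 t le_rfl ht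
    rw [hinit_out x hx] at this
    rw [div_le_iff₀ hc₀]
    linarith
  have hSbdd : BddBelow S := ⟨_, hSlow⟩
  set t₂ := sInf S with ht₂
  have ht₂pos : 0 < t₂ := (by positivity : 0 < ℓ₀ / c₀).trans_le (le_csInf hSne hSlow)
  have hbefore : ∀ t ∈ Set.Ico (0:ℝ) t₂, ∀ x ∉ Ω₀, γ t x < 0 := by
    intro t ht x hx
    by_contra hcon
    exact absurd (csInf_le hSbdd (⟨ht.1, x, hx, not_lt.1 hcon⟩ : t ∈ S)) (not_le.2 ht.2)
  -- strict comparison with the center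
  have hFlt : ∀ t ∈ Set.Ico (0:ℝ) t₂, ∀ x, x ≠ 0 →
      κ * (∫ y in Metric.closedBall x 2, max (γ t y) 0) <
      κ * (∫ y in Metric.closedBall 0 2, max (γ t y) 0) := by
    intro t ht x hx
    apply mul_lt_mul_of_pos_left _ hκ
    have hind : (fun y => max (γ t y) 0) = Ω₀.indicator (fun y => max (γ t y) 0) := by
      ext y
      by_cases hy : y ∈ Ω₀
      · simp [hy]
      · simp [hy, (hbefore t ht y hy).le]
    have hx1 : ∀ x, ∫ y in Metric.closedBall x 2, max (γ t y) 0 =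
        ∫ y in Metric.closedBall x 2 ∩ Ω₀, max (γ t y) 0 := by
      intro x
      conv_lhs => rw [hind]
      rw [setIntegral_indicator hΩm]
    rw [hx1 x, hx1 0, Set.inter_eq_right.2 hΩsub, Set.inter_comm,
      ← integral_inter_add_diff (s := Ω₀) (t := Metric.closedBall x 2)
        Metric.isClosed_closedBall.measurableSet ((hint t ht.1 0).mono_set hΩsub)]
    have hvp : 0 < (volume (Ω₀ \ Metric.closedBall x 2)).toReal := by
      apply ENNReal.toReal_pos _ ((measure_mono Set.diff_subset).trans_lt hΩfin.lt_top).ne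
      have hxn : 0 < ‖x‖ := norm_pos_iff.2 hx
      have hopen : IsOpen ((Metric.ball (0 : EuclideanSpace ℝ (Fin n)) 2 \ Metric.closedBall 0 1) \
          Metric.closedBall x 2) :=
        (Metric.isOpen_ball.sdiff Metric.isClosed_closedBall).sdiff Metric.isClosed_closedBall
      have hne : ((Metric.ball (0 : EuclideanSpace ℝ (Fin n)) 2 \ Metric.closedBall 0 1) \
          Metric.closedBall x 2).Nonempty := by
        set a : ℝ := max (3/2) (2 - ‖x‖ / 2)
        have ha1 : 3/2 ≤ a := le_max_left _ _
        have ha2 : 2 - ‖x‖ / 2 ≤ a := le_max_right _ _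
        have ha3 : a < 2 := max_lt (by norm_num) (by linarith)
        have hyn : ‖(-(a / ‖x‖)) • x‖ = a := by
          rw [norm_smul, norm_neg, Real.norm_of_nonneg (by positivity), div_mul_cancel₀ _ hxn.ne']
        have hyd : ‖(-(a / ‖x‖)) • x - x‖ = a + ‖x‖ := by
          have : (-(a / ‖x‖)) • x - x = (-(a / ‖x‖ + 1)) • x := by module
          rw [this, norm_smul, norm_neg, Real.norm_of_nonneg (by positivity), add_mul,
            div_mul_cancel₀ _ hxn.ne', one_mul]
        refine ⟨(-(a / ‖x‖)) • x, ⟨?_, ?_⟩, ?_⟩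
        · rw [mem_ball_zero_iff, hyn]; exact ha3
        · rw [mem_closedBall_zero_iff, hyn]; linarith
        · rw [Metric.mem_closedBall, dist_eq_norm, hyd]; linarith
      have hp := hopen.measure_pos volume hne
      refine (hp.trans_le (measure_mono ?_)).ne'
      apply Set.diff_subset_diff_left
      rw [hΩ₀]
      exact Set.diff_subset_diff Metric.ball_subset_closedBall Metric.ball_subset_closedBall
    have h1 := hsublow t ht.1 (Ω₀ \ Metric.closedBall x 2) Set.diff_subset
      (hΩm.diff Metric.isClosed_closedBall.measurableSet)
    have h2 : 0 < (volume (Ω₀ \ Metric.closedBall x 2)).toReal * (c₀ * Real.exp (-t)) := by positivity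
    linarith
  have hcomp : ∀ x ∉ Ω₀, x ≠ 0 → γ t₂ x < γ t₂ 0 := by
    intro x hx hx0
    have hmon : StrictMonoOn (fun r => γ r 0 - γ r x) (Set.Icc 0 t₂) := by
      apply strictMonoOn_of_deriv_pos (convex_Icc 0 t₂)
      · exact ((hγ_cont 0).sub (hγ_cont x)).mono Set.Icc_subset_Ici_self
      · intro r hr
        rw [interior_Icc] at hr
        have hr' : r ∈ Set.Ico 0 t₂ := ⟨hr.1.le, hr.2⟩
        have h1 : HasDerivAt (fun r => γ r 0 - γ r x) _ r := (hd r hr.1 0).sub (hd r hr.1 x)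
        rw [h1.deriv, max_eq_right (hbefore r hr' 0 h0mem).le,
          max_eq_right (hbefore r hr' x hx).le]
        have := hFlt r hr' x hx0
        linarith
    have := hmon ⟨le_rfl, ht₂pos.le⟩ ⟨ht₂pos.le, le_rfl⟩ ht₂pos
    simp only [hinit_out x hx, hinit_out 0 h0mem] at this
    linarith
  have hle0 : γ t₂ 0 ≤ 0 := by
    have ht : Tendsto (fun r => γ r 0) (nhdsWithin t₂ (Set.Iio t₂)) (nhds (γ t₂ 0)) :=
      (hd t₂ ht₂pos 0).continuousAt.tendsto.mono_left nhdsWithin_le_nhds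
    refine le_of_tendsto ht ?_
    filter_upwards [Ioo_mem_nhdsLT ht₂pos] with r hr
    exact (hbefore r ⟨hr.1.le, hr.2⟩ 0 h0mem).le
  have hge0 : 0 ≤ γ t₂ 0 := by
    apply le_of_forall_pos_le_add
    intro ε hε
    obtain ⟨t, htS, htlt⟩ := exists_lt_of_csInf_lt hSne
      (show sInf S < t₂ + ε / c₀ by rw [← ht₂]; linarith [show 0 < ε / c₀ by positivity])
    have hle := csInf_le hSbdd htS
    obtain ⟨ht0, x, hx, hγx⟩ := htS
    have h1 := hlip x t₂ t ht₂pos.le hle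
    have h2 : γ t₂ x ≤ γ t₂ 0 := by
      by_cases hx0 : x = 0
      · rw [hx0]
      · exact (hcomp x hx hx0).le
    have h3 : c₀ * (t - t₂) ≤ ε := by
      have : t - t₂ ≤ ε / c₀ := by linarith
      calc _ ≤ c₀ * (ε / c₀) := mul_le_mul_of_nonneg_left this hc₀.le
        _ = ε := by field_simp
    linarith
  have heq : γ t₂ 0 = 0 := le_antisymm hle0 hge0
  refine ⟨t₂, ht₂pos, hbefore, heq, ?_⟩
  intro x hx hx0
  have := hcomp x hx hx0
  rwa [heq] at this
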